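/- Let q be a nonzero complex number, r ≥ 1 an integer, and a_0, a_1, …, a_r, b_1, …, b_r, z complex numbers. For complex parameters, write c_n(A_0,…,A_r; B_1,…,B_r) = (A_0;q)_n (A_1;q)_n ⋯ (A_r;q)_n / [(q;q)_n (B_1;q)_n ⋯ (B_r;q)_n] for the z^n-coefficient of the series ₍r+1₎φ_r[A_0,…,A_r; B_1,…,B_r; q, z]. Assume all q-shifted factorials appearing in denominators are nonzero. Then for every n ≥ 0: (a_0 − 1)(a_1 − b_1) Σ_{k=0}^{n} c_k(a_0/q, a_1, a_2,…,a_r; b_1/q, b_2,…,b_r) · c_{n−k}(a_0 q, a_1, a_2 q,…,a_r q; b_1 q, b_2 q,…,b_r q) = (a_0 − a_1)(1 − b_1) Σ_{k=0}^{n} c_k(a_0, a_1, a_2,…,a_r; b_1, b_2,…,b_r) · c_{n−k}(a_0, a_1, a_2 q,…,a_r q; b_1, b_2 q,…,b_r q) − (1 − a_1)(a_0 − b_1) Σ_{k=0}^{n} c_k(a_0, a_1/q, a_2,…,a_r; b_1/q, b_2,…,b_r) · c_{n−k}(a_0, a_1 q, a_2 q,…,a_r q; b_1 q, b_2 q,…,b_r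 q). (This is the coefficient form of the quadratic ₍r+1₎φ_r identity obtained as a special case of the main quadratic formula.) -/

import Mathlib

/-!
The first two parameters `a 0`, `a 1`, `b 1` play a special role, while the others only enter through
`restCoeff`, the quotient of the `q`-shifted factorials with index `≥ 2`. The point is that shifting all
of these other parameters by `q` is, up to a constant `K`, the same as raising the index:
`restCoeff a b (i + 1) = K / (1 - q ^ (i + 1)) * restCoeff (a q) (b q) i` (`restCoeff_succ`).

Hence the difference of the two sides is `∑ k ≤ n, S k (n - k)`, where

* `S 0 n = 0`, by a polynomial identity in `q ^ n` (`head_bracket`);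
* `S (i + 1) j = K * v i * v j * D i j / (1 - q ^ (i + 1))`, with `v` the shifted `restCoeff` and `D`
  depending only on `a 0`, `a 1`, `b 1`. A rational function identity in `q ^ i`, `q ^ j`
  (`kernel_antisymm`) shows that `D i j / (1 - q ^ (i + 1))` is antisymmetric in `i` and `j`, so the
  sum over `i + j = n - 1` vanishes.
-/

/-- The q-shifted factorial `(a;q)_n = ∏_{k=0}^{n-1} (1 - a q^k)`. -/
noncomputable def qPoch (q a : ℂ) (n : ℕ) : ℂ := ∏ k ∈ Finset.range n, (1 - a * q ^ k)

/-- The `z^n`-coefficient of the series `(r+1)φr[A_0,…,A_r; B_1,…,B_r; q, z]`: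
`c_n = (A_0;q)_n ⋯ (A_r;q)_n / ((q;q)_n (B_1;q)_n ⋯ (B_r;q)_n)`,
where the numerator parameters are `A 0, …, A r` and the denominator parameters are
`B 1, …, B r`. -/
noncomputable def phiCoeff (q : ℂ) (r : ℕ) (A B : ℕ → ℂ) (n : ℕ) : ℂ :=
  (∏ i ∈ Finset.range (r + 1), qPoch q (A i) n) /
    (qPoch q q n * ∏ i ∈ Finset.Icc 1 r, qPoch q (B i) n)

/-- The part of the `n`-th coefficient of an `(s+2)φ(s+1)` series contributed by `(q;q)_n` and by the
parameters with index from `2` to `s + 1`. -/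
noncomputable def restCoeff (q : ℂ) (s : ℕ) (A B : ℕ → ℂ) (n : ℕ) : ℂ :=
  (∏ i ∈ Finset.range s, qPoch q (A (i + 2)) n) /
    (qPoch q q n * ∏ i ∈ Finset.range s, qPoch q (B (i + 2)) n)

lemma qPoch_succ (q a : ℂ) (n : ℕ) : qPoch q a (n + 1) = qPoch q a n * (1 - a * q ^ n) := by
  simp [qPoch, Finset.prod_range_succ]

lemma qPoch_succ' (q a : ℂ) (n : ℕ) : qPoch q a (n + 1) = (1 - a) * qPoch q (a * q) n := by
  simp only [qPoch, Finset.prod_range_succ', pow_zero, mul_one]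
  rw [mul_comm]
  congr 1
  exact Finset.prod_congr rfl fun k _ => by ring

lemma qPoch_div_succ {q : ℂ} (hq : q ≠ 0) (a : ℂ) (n : ℕ) :
    qPoch q (a / q) (n + 1) = (1 - a / q) * qPoch q a n := by
  rw [qPoch_succ', div_mul_cancel₀ _ hq]

/-- Both sides are `(a;q)_{n+1}`; the factor `1 - a` is kept because it may vanish. -/
lemma one_sub_mul_qPoch (q a : ℂ) (n : ℕ) :
    (1 - a) * qPoch q (a * q) n = qPoch q a n * (1 - a * q ^ n) := by
  rw [← qPoch_succ', qPoch_succ]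

lemma phiCoeff_eq (q : ℂ) (s : ℕ) (A B : ℕ → ℂ) (n : ℕ) :
    phiCoeff q (s + 1) A B n =
      qPoch q (A 0) n * qPoch q (A 1) n / qPoch q (B 1) n * restCoeff q s A B n := by
  have h : ∏ i ∈ Finset.Icc 1 (s + 1), qPoch q (B i) n =
      (∏ i ∈ Finset.range s, qPoch q (B (i + 2)) n) * qPoch q (B 1) n := by
    rw [← Finset.Ico_add_one_right_eq_Icc, Finset.prod_Ico_eq_prod_range,
      show s + 1 + 1 - 1 = s + 1 by omega, Finset.prod_range_succ']
    congr 1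
    exact Finset.prod_congr rfl fun k _ => by rw [show 1 + (k + 1) = k + 2 by omega]
  rw [phiCoeff, restCoeff, h, Finset.prod_range_succ', Finset.prod_range_succ', div_mul_div_comm]
  congr 1 <;> ring

lemma restCoeff_congr {q : ℂ} {s : ℕ} {A B A' B' : ℕ → ℂ} {n : ℕ}
    (hA : ∀ i, A (i + 2) = A' (i + 2)) (hB : ∀ i, B (i + 2) = B' (i + 2)) :
    restCoeff q s A B n = restCoeff q s A' B' n := by
  simp only [restCoeff, hA, hB]

lemma restCoeff_succ (q : ℂ) (s : ℕ) (a b : ℕ → ℂ) (n : ℕ) :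
    restCoeff q s a b (n + 1) =
      (∏ i ∈ Finset.range s, (1 - a (i + 2))) / (∏ i ∈ Finset.range s, (1 - b (i + 2))) /
        (1 - q ^ (n + 1)) * restCoeff q s (fun i => a i * q) (fun i => b i * q) n := by
  simp only [restCoeff, qPoch_succ' q (a _), qPoch_succ' q (b _), qPoch_succ q q,
    Finset.prod_mul_distrib]
  rw [div_div, div_mul_div_comm, pow_succ']
  congr 1
  ring

/-- The combination of the first two parameters' factors vanishes when the left index is `0`. -/
lemma head_bracket (q A C B : ℂ) (n : ℕ) (hB : qPoch q B n ≠ 0) (hBq : qPoch q (B * q) n ≠ 0) :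
    (A - 1) * (C - B) * (qPoch q (A * q) n * qPoch q C n / qPoch q (B * q) n)
      - (A - C) * (1 - B) * (qPoch q A n * qPoch q C n / qPoch q B n)
      + (1 - C) * (A - B) * (qPoch q A n * qPoch q (C * q) n / qPoch q (B * q) n) = 0 := by
  have hA := one_sub_mul_qPoch q A n
  have hC := one_sub_mul_qPoch q C n
  have hb := one_sub_mul_qPoch q B n
  field_simp
  linear_combination (-(C - B) * qPoch q C n * qPoch q B n) * hA
    + (A - B) * qPoch q A n * qPoch q B n * hC
    - (A - C) * qPoch q A n * qPoch q C n * hb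

/-- With `x = q ^ i` and `y = q ^ j`, the rational function left over from the factors of the first two
parameters at the indices `(i + 1, j)`, once all `q`-shifted factorials of index `i` and `j` are taken
out. -/
noncomputable def kernel (q A C B x y : ℂ) : ℂ :=
  ((A - B) * (1 - C / q) * (1 - A * x) * (1 - C * y)
      - (C - B) * (1 - A / q) * (1 - C * x) * (1 - A * y)) / ((1 - B / q) * (1 - B * y))
    - (A - C) * (1 - A * x) * (1 - C * x) / (1 - B * x)

lemma kernel_antisymm {q A C B x y : ℂ} (hq : q ≠ 0) (hBq : 1 - B / q ≠ 0) (hx : 1 - B * x ≠ 0)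
    (hy : 1 - B * y ≠ 0) (hqx : 1 - q * x ≠ 0) (hqy : 1 - q * y ≠ 0) :
    kernel q A C B x y / (1 - q * x) + kernel q A C B y x / (1 - q * y) = 0 := by
  have e : 1 - B / q = (q - B) / q := by field_simp
  have h : q - B ≠ 0 := fun h => hBq (by rw [e, h, zero_div])
  unfold kernel
  rw [e]
  field_simp
  ring

/-- The factors of the first two parameters at the indices `(i + 1, j)`, in terms of `kernel`. -/
lemma tail_bracket {q : ℂ} (hq : q ≠ 0) (A C B : ℂ) (i j : ℕ)
    (hB : ∀ n, qPoch q B n ≠ 0) (hBq : ∀ n, qPoch q (B * q) n ≠ 0)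
    (hB1 : ∀ n, 1 - B * q ^ n ≠ 0) :
    (A - 1) * (C - B) *
        (qPoch q (A / q) (i + 1) * qPoch q C (i + 1) / qPoch q (B / q) (i + 1)) *
        (qPoch q (A * q) j * qPoch q C j / qPoch q (B * q) j)
      - (A - C) * (1 - B) *
        (qPoch q A (i + 1) * qPoch q C (i + 1) / qPoch q B (i + 1)) *
        (qPoch q A j * qPoch q C j / qPoch q B j)
      + (1 - C) * (A - B) *
        (qPoch q A (i + 1) * qPoch q (C / q) (i + 1) / qPoch q (B / q) (i + 1)) *
        (qPoch q A j * qPoch q (C * q) j / qPoch q (B * q) j)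
    = (1 - B) * (qPoch q A i * qPoch q C i / qPoch q B i) *
        (qPoch q A j * qPoch q C j / qPoch q B j) * kernel q A C B (q ^ i) (q ^ j) := by
  have hA := one_sub_mul_qPoch q A j
  have hC := one_sub_mul_qPoch q C j
  have hb : 1 / qPoch q (B * q) j = (1 - B) / (qPoch q B j * (1 - B * q ^ j)) := by
    rw [div_eq_div_iff (hBq j) (mul_ne_zero (hB j) (hB1 j)), one_sub_mul_qPoch, one_mul]
  rw [qPoch_div_succ hq, qPoch_div_succ hq, qPoch_div_succ hq, qPoch_succ q A, qPoch_succ q C,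
    qPoch_succ q B, div_eq_mul_one_div _ (qPoch q (B * q) j),
    div_eq_mul_one_div (qPoch q A j * qPoch q (C * q) j), hb]
  have h1 : (A - 1) * (C - B) *
        ((1 - A / q) * qPoch q A i * (qPoch q C i * (1 - C * q ^ i)) /
          ((1 - B / q) * qPoch q B i)) *
        (qPoch q (A * q) j * qPoch q C j * ((1 - B) / (qPoch q B j * (1 - B * q ^ j))))
      = -(C - B) *
        ((1 - A / q) * qPoch q A i * (qPoch q C i * (1 - C * q ^ i)) /
          ((1 - B / q) * qPoch q B i)) *
        (qPoch q A j * (1 - A * q ^ j) * qPoch q C j *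
          ((1 - B) / (qPoch q B j * (1 - B * q ^ j)))) := by
    rw [← hA]; ring
  have h2 : (1 - C) * (A - B) *
        (qPoch q A i * (1 - A * q ^ i) * ((1 - C / q) * qPoch q C i) /
          ((1 - B / q) * qPoch q B i)) *
        (qPoch q A j * qPoch q (C * q) j * ((1 - B) / (qPoch q B j * (1 - B * q ^ j))))
      = (A - B) *
        (qPoch q A i * (1 - A * q ^ i) * ((1 - C / q) * qPoch q C i) /
          ((1 - B / q) * qPoch q B i)) *
        (qPoch q A j * (qPoch q C j * (1 - C * q ^ j)) *
          ((1 - B) / (qPoch q B j * (1 - B * q ^ j)))) := by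
    rw [← hC]; ring
  rw [h1, h2]
  unfold kernel
  simp only [div_eq_mul_inv, mul_inv]
  ring

lemma sum_antidiagonal_antisymm (f : ℕ → ℕ → ℂ) (n : ℕ) (h : ∀ i j, f i j + f j i = 0) :
    ∑ k ∈ Finset.range (n + 1), f k (n - k) = 0 := by
  have h1 : ∑ k ∈ Finset.range (n + 1), f (n - k) k = ∑ k ∈ Finset.range (n + 1), f k (n - k) := by
    rw [← Finset.sum_range_reflect]
    refine Finset.sum_congr rfl fun k hk => ?_
    have := Finset.mem_range.mp hk
    rw [show n + 1 - 1 - k = n - k by omega, show n - (n - k) = k by omega]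
  have h2 : ∑ k ∈ Finset.range (n + 1), (f k (n - k) + f (n - k) k) = 0 :=
    Finset.sum_eq_zero fun k _ => h _ _
  rw [Finset.sum_add_distrib, h1] at h2
  linear_combination h2 / 2

/-- Coefficient form of the quadratic `(r+1)φr` identity (Corollary 1.2). -/
theorem quadratic_formula_phi_coefficients
    (q : ℂ) (hq : q ≠ 0) (r : ℕ) (hr : 1 ≤ r) (a b : ℕ → ℂ)
    (hden : ∀ m : ℕ, qPoch q q m ≠ 0 ∧ qPoch q (b 1 / q) m ≠ 0 ∧
      ∀ i, 1 ≤ i → i ≤ r → qPoch q (b i) m ≠ 0 ∧ qPoch q (b i * q) m ≠ 0) :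
    ∀ n : ℕ,
      (a 0 - 1) * (a 1 - b 1) *
        ∑ k ∈ Finset.range (n + 1),
          phiCoeff q r (fun i => if i = 0 then a 0 / q else a i)
            (fun i => if i = 1 then b 1 / q else b i) k *
          phiCoeff q r (fun i => if i = 1 then a 1 else a i * q) (fun i => b i * q) (n - k)
      = (a 0 - a 1) * (1 - b 1) *
          ∑ k ∈ Finset.range (n + 1),
            phiCoeff q r a b k *
            phiCoeff q r (fun i => if i = 0 then a 0 else if i = 1 then a 1 else a i * q)
              (fun i => if i = 1 then b 1 else b i * q) (n - k)
        - (1 - a 1) * (a 0 - b 1) *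
            ∑ k ∈ Finset.range (n + 1),
              phiCoeff q r (fun i => if i = 1 then a 1 / q else a i)
                (fun i => if i = 1 then b 1 / q else b i) k *
              phiCoeff q r (fun i => if i = 0 then a 0 else a i * q) (fun i => b i * q) (n - k) := by
  intro n
  obtain ⟨s, rfl⟩ : ∃ s, r = s + 1 := ⟨r - 1, by omega⟩
  have hB : ∀ m, qPoch q (b 1) m ≠ 0 := fun m => ((hden m).2.2 1 le_rfl hr).1
  have hBq : ∀ m, qPoch q (b 1 * q) m ≠ 0 := fun m => ((hden m).2.2 1 le_rfl hr).2
  have hB1 : ∀ m, 1 - b 1 * q ^ m ≠ 0 := fun m =>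
    right_ne_zero_of_mul (qPoch_succ q (b 1) m ▸ hB (m + 1))
  have hq1 : ∀ m, 1 - q * q ^ m ≠ 0 := fun m =>
    right_ne_zero_of_mul (qPoch_succ q q m ▸ (hden (m + 1)).1)
  have hBd : 1 - b 1 / q ≠ 0 := left_ne_zero_of_mul (qPoch_succ' q (b 1 / q) 0 ▸ (hden 1).2.1)
  set w : ℕ → ℂ := restCoeff q s a b with hw
  set v : ℕ → ℂ := restCoeff q s (fun i => a i * q) (fun i => b i * q) with hv
  have e1 : ∀ k, phiCoeff q (s + 1) (fun i => if i = 0 then a 0 / q else a i)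
      (fun i => if i = 1 then b 1 / q else b i) k =
      qPoch q (a 0 / q) k * qPoch q (a 1) k / qPoch q (b 1 / q) k * w k := fun k => by
    rw [phiCoeff_eq, restCoeff_congr (A' := a) (B' := b) (by simp) (by simp)]; simp [hw]
  have e2 : ∀ k, phiCoeff q (s + 1) (fun i => if i = 1 then a 1 else a i * q) (fun i => b i * q) k =
      qPoch q (a 0 * q) k * qPoch q (a 1) k / qPoch q (b 1 * q) k * v k := fun k => by
    rw [phiCoeff_eq, restCoeff_congr (A' := fun i => a i * q) (B' := fun i => b i * q)
      (by simp) (by simp)]; simp [hv]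
  have e3 : ∀ k, phiCoeff q (s + 1) a b k =
      qPoch q (a 0) k * qPoch q (a 1) k / qPoch q (b 1) k * w k := fun k => phiCoeff_eq ..
  have e4 : ∀ k, phiCoeff q (s + 1) (fun i => if i = 0 then a 0 else if i = 1 then a 1 else a i * q)
      (fun i => if i = 1 then b 1 else b i * q) k =
      qPoch q (a 0) k * qPoch q (a 1) k / qPoch q (b 1) k * v k := fun k => by
    rw [phiCoeff_eq, restCoeff_congr (A' := fun i => a i * q) (B' := fun i => b i * q)
      (by simp) (by simp)]; simp [hv]
  have e5 : ∀ k, phiCoeff q (s + 1) (fun i => if i = 1 then a 1 / q else a i)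
      (fun i => if i = 1 then b 1 / q else b i) k =
      qPoch q (a 0) k * qPoch q (a 1 / q) k / qPoch q (b 1 / q) k * w k := fun k => by
    rw [phiCoeff_eq, restCoeff_congr (A' := a) (B' := b) (by simp) (by simp)]; simp [hw]
  have e6 : ∀ k, phiCoeff q (s + 1) (fun i => if i = 0 then a 0 else a i * q) (fun i => b i * q) k =
      qPoch q (a 0) k * qPoch q (a 1 * q) k / qPoch q (b 1 * q) k * v k := fun k => by
    rw [phiCoeff_eq, restCoeff_congr (A' := fun i => a i * q) (B' := fun i => b i * q)
      (by simp) (by simp)]; simp [hv]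
  simp only [e1, e2, e3, e4, e5, e6]
  -- `T k m` collects the factors of the first two parameters at the indices `(k, m)`.
  let T : ℕ → ℕ → ℂ := fun k m =>
    (a 0 - 1) * (a 1 - b 1) *
        (qPoch q (a 0 / q) k * qPoch q (a 1) k / qPoch q (b 1 / q) k) *
        (qPoch q (a 0 * q) m * qPoch q (a 1) m / qPoch q (b 1 * q) m)
      - (a 0 - a 1) * (1 - b 1) *
        (qPoch q (a 0) k * qPoch q (a 1) k / qPoch q (b 1) k) *
        (qPoch q (a 0) m * qPoch q (a 1) m / qPoch q (b 1) m)
      + (1 - a 1) * (a 0 - b 1) *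
        (qPoch q (a 0) k * qPoch q (a 1 / q) k / qPoch q (b 1 / q) k) *
        (qPoch q (a 0) m * qPoch q (a 1 * q) m / qPoch q (b 1 * q) m)
  suffices hS : ∑ k ∈ Finset.range (n + 1), T k (n - k) * (w k * v (n - k)) = 0 by
    rw [← sub_eq_zero, ← hS, Finset.mul_sum, Finset.mul_sum, Finset.mul_sum,
      ← Finset.sum_sub_distrib, ← Finset.sum_sub_distrib]
    exact Finset.sum_congr rfl fun k _ => by simp only [T]; ring
  have hT0 : ∀ m, T 0 m = 0 := fun m => by
    rw [← head_bracket q (a 0) (a 1) (b 1) m (hB m) (hBq m)]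
    simp [T, qPoch]
  rw [Finset.sum_range_succ', hT0, zero_mul, add_zero]
  cases n with
  | zero => simp
  | succ p =>
    simp only [Nat.add_sub_add_right]
    refine sum_antidiagonal_antisymm (fun i j => T (i + 1) j * (w (i + 1) * v j)) p fun i j => ?_
    have hT : ∀ i j, T (i + 1) j = _ := fun i j =>
      tail_bracket hq (a 0) (a 1) (b 1) i j hB hBq hB1
    have hk := kernel_antisymm (A := a 0) (C := a 1) hq hBd (hB1 i) (hB1 j) (hq1 i) (hq1 j)
    simp only [hT, hw, restCoeff_succ, ← hv, pow_succ']
    set K := (∏ i ∈ Finset.range s, (1 - a (i + 2))) / (∏ i ∈ Finset.range s, (1 - b (i + 2)))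
    linear_combination (1 - b 1) *
      (qPoch q (a 0) i * qPoch q (a 1) i / qPoch q (b 1) i) *
      (qPoch q (a 0) j * qPoch q (a 1) j / qPoch q (b 1) j) * K * v i * v j * hk
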